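/- Let p ∈ (1,∞) and C_p = (1/2 + ((p+1)/p)·(1 + 2^{p/(p+1)} - 2^{1/(p+1)})/4)^{-1}. Then for all d ∈ ℕ and ε ∈ (0,1/2), the inverse of the L_p-discrepancy satisfies N_p^{disc}(ε,d) ≥ C_p^d·(1-2ε); in particular the L_p-discrepancy suffers from the curse of dimensionality. -/

import Mathlib

open MeasureTheory

/-- The `L_p`-discrepancy of an `N`-element point set `P` in `[0,1)^d`. -/
noncomputable def LpDiscrepancy (p : ℝ) (d N : ℕ) (P : Fin N → (Fin d → ℝ)) : ℝ :=
  (∫ t in Set.Icc (0 : Fin d → ℝ) 1,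
      |((Finset.univ.filter (fun k => ∀ j, P k j < t j)).card : ℝ) / N - ∏ j, t j| ^ p)
    ^ (1 / p)

/-- The `N`-th minimal `L_p`-discrepancy in dimension `d`. -/
noncomputable def minLpDiscrepancy (p : ℝ) (N d : ℕ) : ℝ :=
  sInf ((fun P => LpDiscrepancy p d N P) ''
    {P : Fin N → Fin d → ℝ | ∀ k j, P k j ∈ Set.Ico (0:ℝ) 1})

/-- The inverse of the `N`-th minimal `L_p`-discrepancy; the initial discrepancy is
`1/(p+1)^{d/p}`. -/
noncomputable def invLpDiscrepancy (p ε : ℝ) (d : ℕ) : ℕ :=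
  sInf {N : ℕ | 0 < N ∧ minLpDiscrepancy p N d ≤ ε * (1 / (p + 1) ^ ((d : ℝ) / p))}

/-!
Pair the local discrepancy with `g t = ∏ j, t j ^ (p - 1)`, the function for which Hölder's
inequality `∫ G * g ≤ ‖G‖_p * ‖g‖_q` is an equality at `G t = ∏ j, t j`. The indicator of a box
`(x, 1]` is far from this equality case: in one dimension
`∫ 1_(y,1] * t ^ (p - 1) ≤ K * ‖1_(y,1]‖_p * ‖t ^ (p - 1)‖_q` with `K = C_p⁻¹ < 1`, and all terms
are multiplicative, so in dimension `d` the factor is `K ^ d`. Hence the normalised counting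
function `F` of `N` points satisfies `∫ F * g ≤ N * K ^ d * ‖F‖_p * ‖g‖_q`, which together with the
triangle inequality `‖F‖_p ≤ ‖G‖_p + ‖F - G‖_p` gives `‖F - G‖_p ≥ (1 - N * K ^ d) / 2 * ‖G‖_p`.
-/

/-! ### The one-dimensional inequality

The constant `(31 * p + 33) / 32` below is `p + 1` times the lower bound for `(C_p⁻¹) ^ p` that
Bernoulli's inequality gives in `le_curseRatio_rpow`. Hölder's inequality on `(y, 1]` keeps the
factor `1 - y ^ (p + 1)`, which suffices unless `y` is small; for small `y`, if `3 ≤ p` Euler's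
bound `(1 + 1 / p) ^ p ≤ e` is enough, and if `p ≤ 3` one compares logarithms. -/

theorem log_one_sub_le_neg_two_mul_div {z : ℝ} (hz₀ : 0 ≤ z) (hz₁ : z < 1) :
    Real.log (1 - z) ≤ -(2 * z / (2 - z)) := by
  have hz : 0 < 1 - z := sub_pos.2 hz₁
  have h := Real.le_log_one_add_of_nonneg (div_nonneg hz₀ hz.le)
  have hinv : 1 + z / (1 - z) = (1 - z)⁻¹ := by field_simp; ring
  have hfrac : 2 * (z / (1 - z)) / (z / (1 - z) + 2) = 2 * z / (2 - z) := by
    have : 2 - z ≠ 0 := by linarith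
    have : z + (1 - z) * 2 ≠ 0 := by linarith
    field_simp
    ring
  rw [hinv, Real.log_inv, hfrac] at h
  linarith

theorem one_sub_mul_log_one_sub_sub_mul_log_le {z : ℝ} (hz₀ : 0 < z) (hz₁ : z ≤ 3 / 10) :
    (1 - z) * Real.log (1 - z) - z * Real.log z ≤ (1 - z) / 5 := by
  have hleft : (1 - z) * Real.log (1 - z) ≤ -(0.8095 * z) := by
    refine (mul_le_mul_of_nonneg_left (log_one_sub_le_neg_two_mul_div hz₀.le (by linarith))
      (by linarith)).trans ?_
    rw [mul_neg, neg_le_neg_iff, ← mul_div_assoc, le_div_iff₀ (by linarith)]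
    nlinarith
  have hright : -Real.log z ≤ Real.log 5 + 1 / (5 * z) - 1 := by
    have h := Real.log_le_sub_one_of_pos (show 0 < 1 / (5 * z) by positivity)
    rw [one_div, Real.log_inv, Real.log_mul (by norm_num) hz₀.ne'] at h
    rw [one_div]
    linarith
  have hright' : -(z * Real.log z) ≤ z * (1.6095 - 1) + 1 / 5 := by
    have h5 : Real.log 5 ≤ 1.6095 := Real.log_five_lt_d9.le.trans (by norm_num)
    calc -(z * Real.log z) = z * -Real.log z := by ring
      _ ≤ z * (1.6095 + 1 / (5 * z) - 1) := by gcongr; linarith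
      _ = z * (1.6095 - 1) + 1 / 5 := by field_simp; ring
  linarith

theorem mul_log_one_sub_rpow_le {p y : ℝ} (hp : 1 ≤ p) (hy₀ : 0 < y) (hy₁ : y ≤ 3 / 10) :
    p * Real.log (1 - y ^ p) ≤ Real.log (1 - y) + (p - 1) / 5 := by
  have hsmall : ∀ {q : ℝ}, 1 ≤ q → y ^ q ≤ 3 / 10 := fun hq =>
    (Real.rpow_le_self_of_le_one hy₀.le (by linarith) hq).trans hy₁
  have hderiv : ∀ q : ℝ, 1 ≤ q → HasDerivAt (fun q : ℝ => q / 5 - q * Real.log (1 - y ^ q))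
      (((1 - y ^ q) / 5 - ((1 - y ^ q) * Real.log (1 - y ^ q) - y ^ q * Real.log (y ^ q)))
        / (1 - y ^ q)) q := by
    intro q hq
    have hne : 1 - y ^ q ≠ 0 := by linarith [hsmall hq]
    have hpow := (Real.hasStrictDerivAt_const_rpow hy₀ q).hasDerivAt
    refine (((hasDerivAt_id' q).div_const 5).sub
      ((hasDerivAt_id' q).mul ((hpow.const_sub 1).log hne))).congr_deriv ?_
    rw [Real.log_rpow hy₀]
    field_simp
    ring
  have hmono : MonotoneOn (fun q : ℝ => q / 5 - q * Real.log (1 - y ^ q)) (Set.Ici 1) := by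
    refine monotoneOn_of_hasDerivWithinAt_nonneg (convex_Ici 1)
      (fun q hq => (hderiv q hq).continuousAt.continuousWithinAt)
      (fun q hq => (hderiv q (interior_subset hq)).hasDerivWithinAt) fun q hq => ?_
    have hq₁ : y ^ q ≤ 3 / 10 := hsmall (interior_subset hq)
    have hentropy := one_sub_mul_log_one_sub_sub_mul_log_le (Real.rpow_pos_of_pos hy₀ q) hq₁
    exact div_nonneg (sub_nonneg.2 hentropy) (by linarith)
  have h := hmono Set.self_mem_Ici hp hp
  simp only [Real.rpow_one] at h
  linarith

theorem log_le_sub_inv_div_two {u : ℝ} (hu : 1 ≤ u) : Real.log u ≤ (u - u⁻¹) / 2 := by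
  rw [← Real.sinh_log (by linarith)]
  exact Real.self_le_sinh_iff.2 (Real.log_nonneg hu)

theorem two_mul_sub_one_div_add_one_le_log {p : ℝ} (hp : 1 ≤ p) :
    2 * (p - 1) / (p + 1) ≤ Real.log p := by
  have h := Real.le_log_one_add_of_nonneg (sub_nonneg.2 hp)
  rwa [add_sub_cancel, show p - 1 + 2 = p + 1 by ring] at h

theorem sub_one_div_five_add_mul_log_one_add_inv_le {p : ℝ} (hp₁ : 1 ≤ p) (hp₃ : p ≤ 3) :
    (p - 1) / 5 + p * Real.log (1 + 1 / p) ≤ Real.log ((31 * p + 33) / 32) := by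
  have hp₀ : 0 < p := by linarith
  have hu : Real.log (1 + 1 / p) ≤ (2 * p + 1) / (2 * p * (p + 1)) := by
    refine (log_le_sub_inv_div_two (by simp [hp₀.le])).trans_eq ?_
    field_simp
    ring
  have hsplit : Real.log (1 + 1 / p) = Real.log (p + 1) - Real.log p := by
    rw [← Real.log_div (by linarith) hp₀.ne']
    congr 1
    field_simp
  have hratio : -((p - 1) / (31 * p + 33)) ≤
      Real.log ((31 * p + 33) / 32) - Real.log (p + 1) := by
    rw [← Real.log_div (by positivity) (by positivity)]
    refine le_trans (le_of_eq ?_) (Real.one_sub_inv_le_log_of_pos (by positivity))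
    field_simp
    ring
  have hrational : (p - 1) / 5 + (p - 1) * ((2 * p + 1) / (2 * p * (p + 1)))
      ≤ 2 * (p - 1) / (p + 1) - (p - 1) / (31 * p + 33) := by
    have hcubic : 2 * p * (p + 1) * (31 * p + 38) ≤ 5 * (2 * p - 1) * (31 * p + 33) := by
      nlinarith [mul_nonneg (sub_nonneg.2 hp₁) (sub_nonneg.2 hp₃),
        mul_nonneg (mul_nonneg (sub_nonneg.2 hp₁) (sub_nonneg.2 hp₃)) hp₀.le]
    have hdiff : 2 * (p - 1) / (p + 1) - (p - 1) / (31 * p + 33)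
        - ((p - 1) / 5 + (p - 1) * ((2 * p + 1) / (2 * p * (p + 1))))
        = (p - 1) * (5 * (2 * p - 1) * (31 * p + 33) - 2 * p * (p + 1) * (31 * p + 38))
          / (10 * p * (p + 1) * (31 * p + 33)) := by
      field_simp
      ring
    rw [← sub_nonneg, hdiff]
    exact div_nonneg (mul_nonneg (by linarith) (by linarith)) (by positivity)
  have := mul_le_mul_of_nonneg_left hu (sub_nonneg.2 hp₁)
  linarith [two_mul_sub_one_div_add_one_le_log hp₁]

/-- The quotient of `∫ t in y..1, t ^ (p - 1)` by `∫ t in 0..1, t ^ p`, that is, the pairing of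
the indicator of `(y, 1]` with the test function `t ^ (p - 1)`, normalised by that of `t`. -/
noncomputable def pairingRatio (p y : ℝ) : ℝ := (1 - y ^ p) * (1 + 1 / p)

theorem pairingRatio_rpow_le_of_le_three_of_le {p y : ℝ} (hp₁ : 1 ≤ p) (hp₃ : p ≤ 3) (hy₀ : 0 ≤ y)
    (hy₁ : y ≤ 3 / 10) :
    pairingRatio p y ^ p ≤ (31 * p + 33) / 32 * (1 - y) := by
  have hp₀ : 0 < p := by linarith
  have hyp : y ^ p ≤ 3 / 10 := (Real.rpow_le_self_of_le_one hy₀ (by linarith) hp₁).trans hy₁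
  have hlog : p * Real.log (1 - y ^ p) ≤ Real.log (1 - y) + (p - 1) / 5 := by
    rcases hy₀.eq_or_lt with rfl | hy₀
    · simpa [Real.zero_rpow hp₀.ne'] using div_nonneg (sub_nonneg.2 hp₁) (by norm_num)
    · exact mul_log_one_sub_rpow_le hp₁ hy₀ hy₁
  have hone : 0 < 1 - y ^ p := by linarith
  have hy : 0 < 1 - y := by linarith
  unfold pairingRatio
  rw [← Real.log_le_log_iff (by positivity) (by positivity), Real.log_rpow (by positivity),
    Real.log_mul hone.ne' (by positivity), Real.log_mul (by positivity) hy.ne']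
  linarith [sub_one_div_five_add_mul_log_one_add_inv_le hp₁ hp₃]

theorem setIntegral_Ioc_rpow {a r : ℝ} (ha : a ≤ 1) (hr : -1 < r) :
    ∫ t in Set.Ioc a 1, t ^ r = (1 - a ^ (r + 1)) / (r + 1) := by
  rw [← intervalIntegral.integral_of_le ha, integral_rpow (Or.inl hr), Real.one_rpow]

theorem one_sub_rpow_div_le_holder {p y : ℝ} (hp : 1 < p) (hy₀ : 0 ≤ y) (hy₁ : y ≤ 1) :
    (1 - y ^ p) / p ≤ (1 - y) ^ (1 / p) * ((1 - y ^ (p + 1)) / (p + 1)) ^ (1 - 1 / p) := by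
  have hpq := Real.HolderConjugate.conjExponent hp
  have hnonneg : ∀ t ∈ Set.Ioc y 1, 0 ≤ t := fun t ht => hy₀.trans ht.1.le
  have hmem : MemLp (fun t : ℝ => t ^ (p - 1)) (ENNReal.ofReal p.conjExponent)
      (volume.restrict (Set.Ioc y 1)) := by
    refine MemLp.of_bound (by fun_prop) 1 ((ae_restrict_iff' measurableSet_Ioc).2 (.of_forall ?_))
    intro t ht
    rw [Real.norm_of_nonneg (Real.rpow_nonneg (hnonneg t ht) _)]
    exact Real.rpow_le_one (hnonneg t ht) ht.2 (by linarith)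
  have hholder := integral_mul_le_Lp_mul_Lq_of_nonneg hpq (μ := volume.restrict (Set.Ioc y 1))
    (f := fun _ => 1) (.of_forall fun _ => zero_le_one)
    ((ae_restrict_iff' measurableSet_Ioc).2
      (.of_forall fun t ht => Real.rpow_nonneg (hnonneg t ht) (p - 1))) (memLp_const 1) hmem
  have hpow : ∫ t in Set.Ioc y 1, (t ^ (p - 1)) ^ p.conjExponent
      = (1 - y ^ (p + 1)) / (p + 1) := by
    rw [← setIntegral_Ioc_rpow hy₁ (by linarith)]
    refine setIntegral_congr_fun measurableSet_Ioc fun t ht => ?_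
    rw [← Real.rpow_mul (hnonneg t ht), hpq.sub_one_mul_conj]
  have hq : 1 / p.conjExponent = 1 - 1 / p := by
    rw [one_div, one_div, ← hpq.one_sub_inv]
  have hvol : ∫ _ in Set.Ioc y 1, (1 : ℝ) ^ p = 1 - y := by simp [hy₁]
  rw [hpow, hq, hvol] at hholder
  simpa only [one_mul, setIntegral_Ioc_rpow hy₁ (show -1 < p - 1 by linarith), sub_add_cancel]
    using hholder

theorem pairingRatio_rpow_le_mul_one_sub_rpow {p y : ℝ} (hp : 1 < p) (hy₀ : 0 ≤ y) (hy₁ : y ≤ 1) :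
    pairingRatio p y ^ p ≤ (p + 1) * (1 - y) * (1 - y ^ (p + 1)) ^ (p - 1) := by
  have hp₀ : 0 < p := by linarith
  have hone : ∀ {r : ℝ}, 0 ≤ r → 0 ≤ 1 - y ^ r := fun hr =>
    sub_nonneg.2 (Real.rpow_le_one hy₀ hy₁ hr)
  have hz := hone (show 0 ≤ p + 1 by linarith)
  have hy : 0 ≤ 1 - y := sub_nonneg.2 hy₁
  calc pairingRatio p y ^ p
      = ((p + 1) * ((1 - y ^ p) / p)) ^ p := by
        unfold pairingRatio
        congr 1
        field_simp
    _ ≤ ((p + 1) * ((1 - y) ^ (1 / p) *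
          ((1 - y ^ (p + 1)) / (p + 1)) ^ (1 - 1 / p))) ^ p := by
        have := hone hp₀.le
        gcongr
        exact one_sub_rpow_div_le_holder hp hy₀ hy₁
    _ = (p + 1) ^ p * ((1 - y) * ((1 - y ^ (p + 1)) / (p + 1)) ^ (p - 1)) := by
        rw [Real.mul_rpow (by positivity) (by positivity), Real.mul_rpow (by positivity)
          (by positivity), ← Real.rpow_mul hy, ← Real.rpow_mul (by positivity), sub_mul,
          one_div_mul_cancel hp₀.ne', Real.rpow_one, one_mul]
    _ = (p + 1) * (1 - y) * (1 - y ^ (p + 1)) ^ (p - 1) := by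
        rw [Real.div_rpow hz (by positivity), Real.rpow_sub_one (by positivity : p + 1 ≠ 0)]
        field_simp

theorem one_sub_rpow_le_inv_one_add_mul {z r : ℝ} (hz₀ : 0 ≤ z) (hz₁ : z ≤ 1) (hr : 0 ≤ r) :
    (1 - z) ^ r ≤ (1 + r * z)⁻¹ := by
  calc (1 - z) ^ r ≤ Real.exp (-z) ^ r :=
        Real.rpow_le_rpow (sub_nonneg.2 hz₁) (Real.one_sub_le_exp_neg z) hr
    _ = (Real.exp (r * z))⁻¹ := by rw [← Real.exp_mul, ← Real.exp_neg]; ring_nf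
    _ ≤ (1 + r * z)⁻¹ := by
        gcongr
        linarith [Real.add_one_le_exp (r * z)]

theorem pairingRatio_rpow_le_of_one_le_rpow_mul {p y : ℝ} (hp : 1 < p) (hy₀ : 0 ≤ y) (hy₁ : y ≤ 1)
    (h : 1 ≤ y ^ (p + 1) * (31 * p + 33)) :
    pairingRatio p y ^ p ≤ (31 * p + 33) / 32 * (1 - y) := by
  have hz := one_sub_rpow_le_inv_one_add_mul (Real.rpow_nonneg hy₀ (p + 1))
    (Real.rpow_le_one hy₀ hy₁ (by linarith)) (sub_nonneg.2 hp.le)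
  have hinv : (1 + (p - 1) * y ^ (p + 1))⁻¹ ≤ (31 * p + 33) / (32 * (p + 1)) := by
    rw [← inv_div]
    gcongr
    rw [div_le_iff₀ (by linarith)]
    nlinarith
  calc pairingRatio p y ^ p
      ≤ (p + 1) * (1 - y) * (1 - y ^ (p + 1)) ^ (p - 1) :=
        pairingRatio_rpow_le_mul_one_sub_rpow hp hy₀ hy₁
    _ ≤ (p + 1) * (1 - y) * ((31 * p + 33) / (32 * (p + 1))) := by
        have : 0 ≤ 1 - y := sub_nonneg.2 hy₁
        gcongr
        exact hz.trans hinv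
    _ = (31 * p + 33) / 32 * (1 - y) := by field_simp

theorem one_le_rpow_mul_of_le_three {p y : ℝ} (hp₁ : 1 ≤ p) (hp₃ : p ≤ 3) (hy : 3 / 10 ≤ y) :
    1 ≤ y ^ (p + 1) * (31 * p + 33) := by
  have hlow : (3 / 10 : ℝ) ^ (p + 1) ≤ y ^ (p + 1) := by gcongr
  have hbernoulli : (10 / 3 : ℝ) ^ (p + 1) ≤ 31 * p + 33 := by
    have h := rpow_one_add_le_one_add_mul_self (s := (91 / 9 : ℝ)) (by norm_num)
      (show 0 ≤ (p - 1) / 2 by linarith) (by linarith)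
    have hsplit : (10 / 3 : ℝ) ^ (p + 1) = 100 / 9 * (1 + 91 / 9) ^ ((p - 1) / 2) := by
      rw [show (1 + 91 / 9 : ℝ) = (10 / 3) ^ (2 : ℝ) by norm_num, ← Real.rpow_mul (by norm_num),
        show p + 1 = 2 + 2 * ((p - 1) / 2) by ring, Real.rpow_add (by norm_num)]
      norm_num
    rw [hsplit]
    linarith
  calc (1 : ℝ) = (3 / 10) ^ (p + 1) * (10 / 3) ^ (p + 1) := by
        rw [← Real.mul_rpow (by norm_num) (by norm_num)]; norm_num
    _ ≤ y ^ (p + 1) * (31 * p + 33) := by gcongr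

theorem one_add_inv_rpow_le_exp_one {p : ℝ} (hp : 0 < p) : (1 + 1 / p) ^ p ≤ Real.exp 1 := by
  calc (1 + 1 / p) ^ p ≤ Real.exp (1 / p) ^ p := by
        gcongr
        linarith [Real.add_one_le_exp (1 / p)]
    _ = Real.exp 1 := by rw [← Real.exp_mul, one_div_mul_cancel hp.ne']

theorem exp_one_le_of_rpow_mul_le_one {p y : ℝ} (hp : 3 ≤ p) (hy₀ : 0 ≤ y) (hy₁ : y ≤ 1)
    (h : y ^ (p + 1) * (31 * p + 33) ≤ 1) : Real.exp 1 ≤ (31 * p + 33) / 32 * (1 - y) := by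
  have hz : y ^ (p + 1) ≤ 1 / 126 := by
    rw [le_div_iff₀ (by norm_num)]
    refine le_trans ?_ h
    gcongr
    linarith
  have hroot : y ^ ((p + 1) / 4) ≤ 0.2985 := by
    have h4 : (y ^ ((p + 1) / 4)) ^ 4 ≤ 0.2985 ^ 4 := by
      rw [← Real.rpow_mul_natCast hy₀]
      norm_num
      linarith
    exact le_of_pow_le_pow_left₀ (by norm_num) (by norm_num) h4
  have hbernoulli := one_add_mul_self_le_rpow_one_add (s := y - 1) (p := (p + 1) / 4)
    (by linarith) (by linarith)
  rw [add_sub_cancel] at hbernoulli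
  linarith [Real.exp_one_lt_d9]

theorem pairingRatio_rpow_le_of_rpow_mul_le_one {p y : ℝ} (hp : 3 ≤ p) (hy₀ : 0 ≤ y) (hy₁ : y ≤ 1)
    (h : y ^ (p + 1) * (31 * p + 33) ≤ 1) :
    pairingRatio p y ^ p ≤ (31 * p + 33) / 32 * (1 - y) := by
  have hp₀ : 0 < p := by linarith
  have hone : 0 ≤ 1 - y ^ p := sub_nonneg.2 (Real.rpow_le_one hy₀ hy₁ hp₀.le)
  calc pairingRatio p y ^ p ≤ (1 * (1 + 1 / p)) ^ p := by
        unfold pairingRatio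
        gcongr
        linarith [Real.rpow_nonneg hy₀ p]
    _ ≤ Real.exp 1 := by rw [one_mul]; exact one_add_inv_rpow_le_exp_one hp₀
    _ ≤ (31 * p + 33) / 32 * (1 - y) := exp_one_le_of_rpow_mul_le_one hp hy₀ hy₁ h

theorem pairingRatio_rpow_le {p y : ℝ} (hp : 1 < p) (hy₀ : 0 ≤ y) (hy₁ : y ≤ 1) :
    pairingRatio p y ^ p ≤ (31 * p + 33) / 32 * (1 - y) := by
  rcases le_total 1 (y ^ (p + 1) * (31 * p + 33)) with h | h
  · exact pairingRatio_rpow_le_of_one_le_rpow_mul hp hy₀ hy₁ h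
  rcases le_total 3 p with hp₃ | hp₃
  · exact pairingRatio_rpow_le_of_rpow_mul_le_one hp₃ hy₀ hy₁ h
  rcases le_total y (3 / 10) with hy | hy
  · exact pairingRatio_rpow_le_of_le_three_of_le hp.le hp₃ hy₀ hy
  · exact pairingRatio_rpow_le_of_one_le_rpow_mul hp hy₀ hy₁
      (one_le_rpow_mul_of_le_three hp.le hp₃ hy)

/-! ### The constant `C_p` -/

theorem concaveOn_two_rpow_one_sub_sub_two_rpow_sub_sq :
    ConcaveOn ℝ (Set.Icc 0 (1 / 2)) fun x : ℝ => (2 : ℝ) ^ (1 - x) - 2 ^ x - x ^ 2 / 4 := by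
  have hpow : ∀ x : ℝ, HasDerivAt (fun x : ℝ => (2 : ℝ) ^ x) (2 ^ x * Real.log 2) x := fun x =>
    (Real.hasStrictDerivAt_const_rpow two_pos x).hasDerivAt
  have hpow' : ∀ x : ℝ, HasDerivAt (fun x : ℝ => (2 : ℝ) ^ (1 - x))
      (-(2 ^ (1 - x) * Real.log 2)) x := fun x =>
    ((hpow (1 - x)).comp x ((hasDerivAt_id' x).const_sub 1)).congr_deriv (by ring)
  have hderiv : ∀ x : ℝ, HasDerivAt (fun x : ℝ => (2 : ℝ) ^ (1 - x) - 2 ^ x - x ^ 2 / 4)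
      (-(2 ^ (1 - x) * Real.log 2) - 2 ^ x * Real.log 2 - x / 2) x := fun x =>
    (((hpow' x).sub (hpow x)).sub ((hasDerivAt_pow 2 x).div_const 4)).congr_deriv
      (by push_cast; ring)
  have hderiv₂ : ∀ x : ℝ, HasDerivAt
      (fun x : ℝ => -((2 : ℝ) ^ (1 - x) * Real.log 2) - 2 ^ x * Real.log 2 - x / 2)
      ((2 ^ (1 - x) - 2 ^ x) * Real.log 2 ^ 2 - 1 / 2) x := fun x =>
    ((((hpow' x).mul_const _).neg.sub ((hpow x).mul_const _)).sub
      ((hasDerivAt_id' x).div_const 2)).congr_deriv (by ring)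
  refine concaveOn_of_hasDerivWithinAt2_nonpos (convex_Icc _ _)
    (fun x _ => (hderiv x).continuousAt.continuousWithinAt)
    (fun x _ => (hderiv x).hasDerivWithinAt) (fun x _ => (hderiv₂ x).hasDerivWithinAt)
    fun x hx => ?_
  have hx₀ : 0 ≤ x := (interior_subset hx : x ∈ Set.Icc (0 : ℝ) (1 / 2)).1
  have hle : (2 : ℝ) ^ (1 - x) ≤ 2 := by
    simpa using Real.rpow_le_rpow_of_exponent_le one_le_two (sub_le_self 1 hx₀)
  have hge : 1 ≤ (2 : ℝ) ^ x := Real.one_le_rpow one_le_two hx₀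
  have hlog : Real.log 2 ^ 2 ≤ 1 / 2 := by
    nlinarith [Real.log_two_lt_d9, Real.log_two_gt_d9]
  nlinarith [sq_nonneg (Real.log 2)]

theorem le_two_rpow_one_sub_sub_two_rpow {x : ℝ} (hx₀ : 0 ≤ x) (hx₁ : x ≤ 1 / 2) :
    1 - 2 * x - x * (1 / 2 - x) / 4 ≤ (2 : ℝ) ^ (1 - x) - 2 ^ x := by
  have hchord := concaveOn_two_rpow_one_sub_sub_two_rpow_sub_sq.2
    (Set.left_mem_Icc.2 (by norm_num)) (Set.right_mem_Icc.2 (by norm_num))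
    (show 0 ≤ 1 - 2 * x by linarith) (show 0 ≤ 2 * x by linarith) (by ring)
  have hpoint : (1 - 2 * x) * 0 + 2 * x * (1 / 2) = x := by ring
  have hhalf : (1 : ℝ) - 1 / 2 = 1 / 2 := by norm_num
  simp only [smul_eq_mul, hpoint, hhalf, sub_zero, Real.rpow_one, Real.rpow_zero] at hchord
  linarith

/-- The reciprocal of the paper's constant `C_p`: in one variable, the pairing of the indicator
of `(y, 1]` with `t ^ (p - 1)` is at most `curseRatio p` times the Hölder bound. -/
noncomputable def curseRatio (p : ℝ) : ℝ :=
  1 / 2 + ((p + 1) / p) * (1 + 2 ^ (p / (p + 1)) - 2 ^ (1 / (p + 1))) / 4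

theorem le_curseRatio {p : ℝ} (hp : 1 ≤ p) :
    1 - (p - 1) / (32 * p * (p + 1)) ≤ curseRatio p := by
  have hexp : 1 - 1 / (p + 1) = p / (p + 1) := by field_simp; ring
  have h := le_two_rpow_one_sub_sub_two_rpow (x := 1 / (p + 1)) (by positivity)
    (one_div_le_one_div_of_le two_pos (by linarith))
  rw [hexp] at h
  calc 1 - (p - 1) / (32 * p * (p + 1))
      = 1 / 2 + (p + 1) / p * (1 + (1 - 2 * (1 / (p + 1))
          - 1 / (p + 1) * (1 / 2 - 1 / (p + 1)) / 4)) / 4 := by field_simp; ring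
    _ ≤ 1 / 2 + (p + 1) / p * (1 + (2 ^ (p / (p + 1)) - 2 ^ (1 / (p + 1)))) / 4 := by gcongr
    _ = curseRatio p := by rw [curseRatio]; ring

theorem sub_one_div_mul_add_one_lt_one {p : ℝ} (hp : 1 ≤ p) : (p - 1) / (32 * p * (p + 1)) < 1 := by
  rw [div_lt_one (by positivity)]
  nlinarith

theorem curseRatio_pos {p : ℝ} (hp : 1 ≤ p) : 0 < curseRatio p :=
  (sub_pos.2 (sub_one_div_mul_add_one_lt_one hp)).trans_le (le_curseRatio hp)

theorem le_curseRatio_rpow {p : ℝ} (hp : 1 ≤ p) :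
    (31 * p + 33) / (32 * (p + 1)) ≤ curseRatio p ^ p := by
  have hlt := sub_one_div_mul_add_one_lt_one hp
  calc (31 * p + 33) / (32 * (p + 1)) = 1 + p * -((p - 1) / (32 * p * (p + 1))) := by
        field_simp
        ring
    _ ≤ (1 + -((p - 1) / (32 * p * (p + 1)))) ^ p :=
        one_add_mul_self_le_rpow_one_add (by linarith) hp
    _ ≤ curseRatio p ^ p := by
        gcongr
        · linarith
        · linarith [le_curseRatio hp]

theorem one_sub_rpow_div_le_curseRatio {p y : ℝ} (hp : 1 < p) (hy₀ : 0 ≤ y) (hy₁ : y ≤ 1) :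
    (1 - y ^ p) / p ≤ curseRatio p * (1 - y) ^ (1 / p) * (1 / (p + 1)) ^ (1 - 1 / p) := by
  have hp₀ : 0 < p := by linarith
  have hy : 0 ≤ 1 - y := sub_nonneg.2 hy₁
  have hratio : 0 ≤ pairingRatio p y :=
    mul_nonneg (sub_nonneg.2 (Real.rpow_le_one hy₀ hy₁ hp₀.le)) (by positivity)
  have hK := (curseRatio_pos hp.le).le
  have hpow : pairingRatio p y ^ p
      ≤ (curseRatio p * (1 - y) ^ (1 / p) * (p + 1) ^ (1 / p)) ^ p := by
    calc pairingRatio p y ^ p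
        ≤ (31 * p + 33) / (32 * (p + 1)) * (1 - y) * (p + 1) :=
          (pairingRatio_rpow_le hp hy₀ hy₁).trans_eq (by field_simp)
      _ ≤ curseRatio p ^ p * (1 - y) * (p + 1) := by
          gcongr
          exact le_curseRatio_rpow hp.le
      _ = _ := by
          rw [Real.mul_rpow (by positivity) (by positivity), Real.mul_rpow hK (by positivity),
            ← Real.rpow_mul hy, ← Real.rpow_mul (by positivity), one_div_mul_cancel hp₀.ne',
            Real.rpow_one, Real.rpow_one]
  have hroot := (Real.rpow_le_rpow_iff hratio (by positivity) hp₀).1 hpow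
  calc (1 - y ^ p) / p = pairingRatio p y / (p + 1) := by
        unfold pairingRatio
        field_simp
    _ ≤ curseRatio p * (1 - y) ^ (1 / p) * (p + 1) ^ (1 / p) / (p + 1) := by gcongr
    _ = _ := by
        rw [one_div (p + 1), Real.inv_rpow (by positivity), ← Real.rpow_neg (by positivity),
          neg_sub, Real.rpow_sub_one (by positivity), mul_div_assoc]

/-! ### Duality and the discrepancy -/

section LpNorm

variable {α : Type*} [MeasurableSpace α] {μ : Measure α} {p q : ℝ}

theorem lpNorm_ofReal_eq_integral_abs_rpow {f : α → ℝ} (hp : 0 < p)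
    (hf : AEStronglyMeasurable f μ) :
    lpNorm f (ENNReal.ofReal p) μ = (∫ a, |f a| ^ p ∂μ) ^ (1 / p) := by
  rw [lpNorm_eq_integral_norm_rpow_toReal (by simpa using hp) ENNReal.ofReal_ne_top hf,
    ENNReal.toReal_ofReal hp.le, one_div]
  rfl

theorem integral_mul_le_lpNorm_mul_lpNorm {f g : α → ℝ} (hpq : p.HolderConjugate q)
    (hf : MemLp f (ENNReal.ofReal p) μ) (hg : MemLp g (ENNReal.ofReal q) μ) :
    ∫ a, f a * g a ∂μ ≤ lpNorm f (ENNReal.ofReal p) μ * lpNorm g (ENNReal.ofReal q) μ := by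
  rw [lpNorm_ofReal_eq_integral_abs_rpow hpq.pos hf.1,
    lpNorm_ofReal_eq_integral_abs_rpow hpq.symm.pos hg.1]
  calc ∫ a, f a * g a ∂μ ≤ ∫ a, ‖f a * g a‖ ∂μ :=
        (Real.le_norm_self _).trans (norm_integral_le_integral_norm _)
    _ = ∫ a, ‖f a‖ * ‖g a‖ ∂μ := by simp only [norm_mul]
    _ ≤ _ := integral_mul_norm_le_Lp_mul_Lq hpq hf hg

theorem integrable_mul_of_holderConjugate {f g : α → ℝ} (hpq : p.HolderConjugate q)
    (hf : MemLp f (ENNReal.ofReal p) μ) (hg : MemLp g (ENNReal.ofReal q) μ) :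
    Integrable (fun a => f a * g a) μ :=
  have := hpq.ennrealOfReal
  hf.integrable_mul hg

variable {κ : Type*} [Fintype κ] {f : κ → α → ℝ} {g G : α → ℝ} {c : ℝ}

theorem integral_sum_mul_le_card_mul_lpNorm (hpq : p.HolderConjugate q) (hc : 0 ≤ c)
    (hf : ∀ k, MemLp (f k) (ENNReal.ofReal p) μ) (hf₀ : ∀ k a, 0 ≤ f k a)
    (hg : MemLp g (ENNReal.ofReal q) μ)
    (hfg : ∀ k, ∫ a, f k a * g a ∂μ
      ≤ c * lpNorm (f k) (ENNReal.ofReal p) μ * lpNorm g (ENNReal.ofReal q) μ) :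
    ∫ a, (∑ k, f k) a * g a ∂μ ≤
      Fintype.card κ * c * lpNorm (∑ k, f k) (ENNReal.ofReal p) μ
        * lpNorm g (ENNReal.ofReal q) μ := by
  have hle : ∀ k, lpNorm (f k) (ENNReal.ofReal p) μ ≤ lpNorm (∑ k, f k) (ENNReal.ofReal p) μ := by
    refine fun k => lpNorm_mono_real (memLp_finsetSum' _ fun k _ => hf k) fun a => ?_
    rw [Real.norm_of_nonneg (hf₀ k a), Finset.sum_apply]
    exact Finset.single_le_sum (fun k _ => hf₀ k a) (Finset.mem_univ k)
  calc ∫ a, (∑ k, f k) a * g a ∂μ = ∑ k, ∫ a, f k a * g a ∂μ := by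
        simp only [Finset.sum_apply, Finset.sum_mul]
        exact integral_finsetSum _ fun k _ => integrable_mul_of_holderConjugate hpq (hf k) hg
    _ ≤ ∑ _k : κ, c * lpNorm (∑ k, f k) (ENNReal.ofReal p) μ * lpNorm g (ENNReal.ofReal q) μ :=
        Finset.sum_le_sum fun k _ => (hfg k).trans <| by
          gcongr
          · exact lpNorm_nonneg
          · exact hle k
    _ = _ := by
        rw [Finset.sum_const, Finset.card_univ, nsmul_eq_mul]
        ring

theorem one_sub_div_two_mul_le {a b m x : ℝ} (hm : 0 ≤ m) (ha : 0 ≤ a) (hx : 0 ≤ x)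
    (hab : a ≤ x + m * b) (hba : b ≤ a + x) : (1 - m) / 2 * a ≤ x := by
  rcases le_total m 1 with hm₁ | hm₁
  · nlinarith
  · nlinarith

theorem one_sub_card_mul_div_two_mul_lpNorm_le (hpq : p.HolderConjugate q) (hc : 0 ≤ c)
    (hf : ∀ k, MemLp (f k) (ENNReal.ofReal p) μ) (hf₀ : ∀ k a, 0 ≤ f k a)
    (hG : MemLp G (ENNReal.ofReal p) μ) (hg : MemLp g (ENNReal.ofReal q) μ)
    (hg₀ : 0 < lpNorm g (ENNReal.ofReal q) μ)
    (hGg : lpNorm G (ENNReal.ofReal p) μ * lpNorm g (ENNReal.ofReal q) μ ≤ ∫ a, G a * g a ∂μ)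
    (hfg : ∀ k, ∫ a, f k a * g a ∂μ
      ≤ c * lpNorm (f k) (ENNReal.ofReal p) μ * lpNorm g (ENNReal.ofReal q) μ) :
    (1 - Fintype.card κ * c) / 2 * lpNorm G (ENNReal.ofReal p) μ
      ≤ lpNorm (∑ k, f k - G) (ENNReal.ofReal p) μ := by
  have hF : MemLp (∑ k, f k) (ENNReal.ofReal p) μ := memLp_finsetSum' _ fun k _ => hf k
  have hFg := integral_sum_mul_le_card_mul_lpNorm hpq hc hf hf₀ hg hfg
  have hdiff := integral_mul_le_lpNorm_mul_lpNorm hpq (hG.sub hF) hg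
  have hsplit : ∫ a, G a * g a ∂μ = ∫ a, (G - ∑ k, f k) a * g a ∂μ
      + ∫ a, (∑ k, f k) a * g a ∂μ := by
    rw [← integral_add (integrable_mul_of_holderConjugate hpq (hG.sub hF) hg)
      (integrable_mul_of_holderConjugate hpq hF hg)]
    simp only [Pi.sub_apply, sub_mul, sub_add_cancel]
  have htriangle := lpNorm_le_lpNorm_add_lpNorm_sub' (f := ∑ k, f k) hG
    (ENNReal.one_le_ofReal.2 hpq.lt.le)
  rw [lpNorm_sub_comm] at hdiff
  have hdual : lpNorm G (ENNReal.ofReal p) μ ≤ lpNorm (∑ k, f k - G) (ENNReal.ofReal p) μ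
      + Fintype.card κ * c * lpNorm (∑ k, f k) (ENNReal.ofReal p) μ := by
    refine le_of_mul_le_mul_right ?_ hg₀
    linarith
  exact one_sub_div_two_mul_le (by positivity) lpNorm_nonneg lpNorm_nonneg hdual htriangle

end LpNorm

section TensorProduct

variable {ι : Type*} [Fintype ι] {Ω : ι → Type*} [∀ i, MeasurableSpace (Ω i)]
  {μ : ∀ i, Measure (Ω i)} [∀ i, SigmaFinite (μ i)] {f g : ∀ i, Ω i → ℝ} {p q : ℝ}

theorem aestronglyMeasurable_fintype_prod (hf : ∀ i, AEStronglyMeasurable (f i) (μ i)) :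
    AEStronglyMeasurable (fun t => ∏ i, f i (t i)) (Measure.pi μ) :=
  Finset.aestronglyMeasurable_fun_prod _ fun i _ =>
    (hf i).comp_quasiMeasurePreserving (Measure.quasiMeasurePreserving_eval μ i)

theorem memLp_fintype_prod (hp : 0 < p) (hf : ∀ i, MemLp (f i) (ENNReal.ofReal p) (μ i)) :
    MemLp (fun t => ∏ i, f i (t i)) (ENNReal.ofReal p) (Measure.pi μ) := by
  have hp₀ : ENNReal.ofReal p ≠ 0 := by simpa using hp
  rw [← integrable_norm_rpow_iff (aestronglyMeasurable_fintype_prod fun i => (hf i).1) hp₀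
    ENNReal.ofReal_ne_top]
  simp only [norm_prod, ← Real.finsetProd_rpow _ _ fun _ _ => norm_nonneg _]
  exact .fintype_prod_dep fun i => (hf i).integrable_norm_rpow hp₀ ENNReal.ofReal_ne_top

theorem lpNorm_fintype_prod (hp : 0 < p) (hf : ∀ i, AEStronglyMeasurable (f i) (μ i)) :
    lpNorm (fun t => ∏ i, f i (t i)) (ENNReal.ofReal p) (Measure.pi μ)
      = ∏ i, lpNorm (f i) (ENNReal.ofReal p) (μ i) := by
  simp only [lpNorm_ofReal_eq_integral_abs_rpow hp (aestronglyMeasurable_fintype_prod hf),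
    lpNorm_ofReal_eq_integral_abs_rpow hp (hf _), Finset.abs_prod,
    ← Real.finsetProd_rpow _ _ fun _ _ => abs_nonneg _]
  rw [integral_fintype_prod_eq_prod (𝕜 := ℝ) fun i t => |f i t| ^ p,
    Real.finsetProd_rpow _ _ fun i _ => integral_nonneg fun t => by positivity]

theorem integral_fintype_prod_mul_le {c : ℝ} (hp : 0 < p) (hq : 0 < q)
    (hf : ∀ i, AEStronglyMeasurable (f i) (μ i)) (hg : ∀ i, AEStronglyMeasurable (g i) (μ i))
    (hfg₀ : ∀ i, 0 ≤ ∫ t, f i t * g i t ∂(μ i))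
    (hfg : ∀ i, ∫ t, f i t * g i t ∂(μ i)
      ≤ c * lpNorm (f i) (ENNReal.ofReal p) (μ i) * lpNorm (g i) (ENNReal.ofReal q) (μ i)) :
    ∫ t, (∏ i, f i (t i)) * ∏ i, g i (t i) ∂(Measure.pi μ)
      ≤ c ^ Fintype.card ι * lpNorm (fun t => ∏ i, f i (t i)) (ENNReal.ofReal p) (Measure.pi μ)
        * lpNorm (fun t => ∏ i, g i (t i)) (ENNReal.ofReal q) (Measure.pi μ) := by
  simp only [← Finset.prod_mul_distrib]
  rw [integral_fintype_prod_eq_prod (𝕜 := ℝ) fun i t => f i t * g i t, lpNorm_fintype_prod hp hf,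
    lpNorm_fintype_prod hq hg, ← Finset.card_univ, ← Finset.prod_const, ← Finset.prod_mul_distrib,
    ← Finset.prod_mul_distrib]
  exact Finset.prod_le_prod (fun i _ => hfg₀ i) fun i _ => hfg i

end TensorProduct

section UnitInterval

/-- The uniform distribution on `[0, 1]`. -/
noncomputable abbrev unitIntervalMeasure : Measure ℝ := volume.restrict (Set.Icc 0 1)

variable {p q r y : ℝ}

theorem integral_Icc_indicator_Ioi_mul_rpow (hy₀ : 0 ≤ y) (hy₁ : y ≤ 1) (hr : -1 < r) :
    ∫ t, (Set.Ioi y).indicator (1 : ℝ → ℝ) t * t ^ r ∂unitIntervalMeasure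
      = (1 - y ^ (r + 1)) / (r + 1) := by
  have hinter : Set.Ioi y ∩ Set.Icc 0 1 = Set.Ioc y 1 := by
    ext t
    exact ⟨fun h => ⟨h.1, h.2.2⟩, fun h => ⟨h.1, hy₀.trans h.1.le, h.2⟩⟩
  have hind : ∀ t : ℝ, (Set.Ioi y).indicator 1 t * t ^ r = (Set.Ioi y).indicator (· ^ r) t := by
    intro t
    by_cases ht : t ∈ Set.Ioi y <;> simp [ht]
  simp only [hind]
  rw [integral_indicator measurableSet_Ioi, Measure.restrict_restrict measurableSet_Ioi, hinter,
    setIntegral_Ioc_rpow hy₁ hr]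

theorem memLp_indicator_Ioi {s : ENNReal} :
    MemLp ((Set.Ioi y).indicator (1 : ℝ → ℝ)) s unitIntervalMeasure :=
  (memLp_const 1).indicator measurableSet_Ioi

theorem lpNorm_indicator_Ioi (hp : 0 < p) (hy₀ : 0 ≤ y) (hy₁ : y ≤ 1) :
    lpNorm ((Set.Ioi y).indicator (1 : ℝ → ℝ)) (ENNReal.ofReal p) unitIntervalMeasure
      = (1 - y) ^ (1 / p) := by
  have habs : ∀ t, |(Set.Ioi y).indicator (1 : ℝ → ℝ) t| ^ p
      = (Set.Ioi y).indicator 1 t * t ^ (0 : ℝ) := by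
    intro t
    by_cases ht : t ∈ Set.Ioi y <;> simp [ht, hp.ne']
  rw [lpNorm_ofReal_eq_integral_abs_rpow hp (memLp_indicator_Ioi (s := 0)).1]
  simp only [habs, integral_Icc_indicator_Ioi_mul_rpow hy₀ hy₁ neg_one_lt_zero]
  simp

theorem memLp_rpow_Icc {s : ENNReal} (hr : 0 ≤ r) :
    MemLp (fun t : ℝ => t ^ r) s unitIntervalMeasure := by
  refine .of_bound (by fun_prop) 1 ((ae_restrict_iff' measurableSet_Icc).2 (.of_forall ?_))
  intro t ht
  rw [Real.norm_of_nonneg (Real.rpow_nonneg ht.1 r)]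
  exact Real.rpow_le_one ht.1 ht.2 hr

theorem integral_Icc_rpow (hr : -1 < r) : ∫ t, t ^ r ∂unitIntervalMeasure = 1 / (r + 1) := by
  rw [integral_Icc_eq_integral_Ioc, setIntegral_Ioc_rpow zero_le_one hr,
    Real.zero_rpow (by linarith), sub_zero]

theorem lpNorm_rpow_Icc (hp : 0 < p) (hr : 0 ≤ r) :
    lpNorm (fun t : ℝ => t ^ r) (ENNReal.ofReal p) unitIntervalMeasure
      = (1 / (r * p + 1)) ^ (1 / p) := by
  rw [lpNorm_ofReal_eq_integral_abs_rpow hp (memLp_rpow_Icc hr (s := 0)).1,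
    ← integral_Icc_rpow (by linarith [mul_nonneg hr hp.le])]
  congr 1
  refine setIntegral_congr_fun measurableSet_Icc fun t ht => ?_
  rw [abs_of_nonneg (Real.rpow_nonneg ht.1 r), Real.rpow_mul ht.1]

theorem lpNorm_id_Icc (hp : 0 < p) :
    lpNorm (fun t : ℝ => t) (ENNReal.ofReal p) unitIntervalMeasure
      = (1 / (p + 1)) ^ (1 / p) := by
  simpa using lpNorm_rpow_Icc hp zero_le_one

theorem lpNorm_rpow_sub_one_Icc (hpq : p.HolderConjugate q) :
    lpNorm (fun t : ℝ => t ^ (p - 1)) (ENNReal.ofReal q) unitIntervalMeasure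
      = (1 / (p + 1)) ^ (1 / q) := by
  rw [lpNorm_rpow_Icc hpq.symm.pos hpq.sub_one_pos.le, hpq.sub_one_mul_conj]

theorem integral_indicator_Ioi_mul_rpow_le (hpq : p.HolderConjugate q) (hy₀ : 0 ≤ y)
    (hy₁ : y ≤ 1) :
    ∫ t, (Set.Ioi y).indicator (1 : ℝ → ℝ) t * t ^ (p - 1) ∂unitIntervalMeasure
      ≤ curseRatio p
        * lpNorm ((Set.Ioi y).indicator (1 : ℝ → ℝ)) (ENNReal.ofReal p) unitIntervalMeasure
        * lpNorm (fun t => t ^ (p - 1)) (ENNReal.ofReal q) unitIntervalMeasure := by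
  rw [integral_Icc_indicator_Ioi_mul_rpow hy₀ hy₁ (by linarith [hpq.pos]),
    lpNorm_indicator_Ioi hpq.pos hy₀ hy₁, lpNorm_rpow_sub_one_Icc hpq, sub_add_cancel, one_div q,
    ← hpq.one_sub_inv, ← one_div p]
  exact one_sub_rpow_div_le_curseRatio hpq.lt hy₀ hy₁

theorem integral_mul_rpow_sub_one_Icc (hpq : p.HolderConjugate q) :
    ∫ t, t * t ^ (p - 1) ∂unitIntervalMeasure
      = lpNorm (fun t : ℝ => t) (ENNReal.ofReal p) unitIntervalMeasure
        * lpNorm (fun t => t ^ (p - 1)) (ENNReal.ofReal q) unitIntervalMeasure := by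
  have hp : 0 < p + 1 := by linarith [hpq.pos]
  have hpow : ∀ t ∈ Set.Icc (0 : ℝ) 1, t * t ^ (p - 1) = t ^ p := fun t ht => by
    rw [← Real.rpow_one_add' ht.1 (by simpa using hpq.pos.ne'), add_sub_cancel]
  rw [setIntegral_congr_fun measurableSet_Icc hpow, integral_Icc_rpow (by linarith),
    lpNorm_id_Icc hpq.pos, lpNorm_rpow_sub_one_Icc hpq, ← Real.rpow_add (by positivity),
    one_div p, one_div q, hpq.inv_add_inv_eq_one, Real.rpow_one]

end UnitInterval

section UnitCube

/-- The uniform distribution on `[0, 1]^ι`, as a product measure so that integrals and norms of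
products of one-variable functions factor. -/
noncomputable abbrev unitCubeMeasure (ι : Type*) [Fintype ι] : Measure (ι → ℝ) :=
  Measure.pi fun _ => unitIntervalMeasure

variable {ι : Type*} [Fintype ι] {p q : ℝ}

theorem volume_restrict_Icc_pi (a b : ι → ℝ) :
    (volume : Measure (ι → ℝ)).restrict (Set.Icc a b)
      = Measure.pi fun i => volume.restrict (Set.Icc (a i) (b i)) := by
  rw [← Set.pi_univ_Icc, volume_pi, Measure.restrict_pi_pi]

/-- The indicator of `∏ j, (x j, ∞)`. As a function of `t` it tells whether `x` lies in the
anchored box `[0, t)`, so it is the contribution of the point `x` to the counting function. -/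
noncomputable def boxIndicator (x t : ι → ℝ) : ℝ :=
  ∏ j, (Set.Ioi (x j)).indicator 1 (t j)

theorem boxIndicator_eq_ite (x t : ι → ℝ) [Decidable (∀ j, x j < t j)] :
    boxIndicator x t = if ∀ j, x j < t j then 1 else 0 := by
  split_ifs with h
  · exact Finset.prod_eq_one fun j _ => Set.indicator_of_mem (h j) 1
  · obtain ⟨j, hj⟩ := not_forall.1 h
    exact Finset.prod_eq_zero (Finset.mem_univ j) (Set.indicator_of_notMem hj 1)

theorem boxIndicator_nonneg (x t : ι → ℝ) : 0 ≤ boxIndicator x t :=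
  Finset.prod_nonneg fun _ _ => Set.indicator_nonneg (fun _ _ => zero_le_one) _

theorem memLp_boxIndicator (hp : 0 < p) (x : ι → ℝ) :
    MemLp (boxIndicator x) (ENNReal.ofReal p) (unitCubeMeasure ι) :=
  memLp_fintype_prod hp fun _ => memLp_indicator_Ioi

theorem integral_boxIndicator_mul_le (hpq : p.HolderConjugate q) {x : ι → ℝ}
    (hx : ∀ j, x j ∈ Set.Icc (0 : ℝ) 1) :
    ∫ t, boxIndicator x t * ∏ j, t j ^ (p - 1) ∂(unitCubeMeasure ι)
      ≤ curseRatio p ^ Fintype.card ι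
        * lpNorm (boxIndicator x) (ENNReal.ofReal p) (unitCubeMeasure ι)
        * lpNorm (fun t => ∏ j, t j ^ (p - 1)) (ENNReal.ofReal q) (unitCubeMeasure ι) := by
  refine integral_fintype_prod_mul_le hpq.pos hpq.symm.pos
    (fun j => (memLp_indicator_Ioi (s := 0)).1)
    (fun _ => (memLp_rpow_Icc (s := 0) hpq.sub_one_pos.le).1) (fun j => ?_)
    fun j => integral_indicator_Ioi_mul_rpow_le hpq (hx j).1 (hx j).2
  refine setIntegral_nonneg measurableSet_Icc fun t ht => mul_nonneg ?_ (Real.rpow_nonneg ht.1 _)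
  exact Set.indicator_nonneg (fun _ _ => zero_le_one) t

theorem memLp_prod_coord (hp : 0 < p) :
    MemLp (fun t : ι → ℝ => ∏ j, t j) (ENNReal.ofReal p) (unitCubeMeasure ι) :=
  memLp_fintype_prod hp fun _ => by simpa using memLp_rpow_Icc zero_le_one

theorem lpNorm_prod_coord (hp : 0 < p) :
    lpNorm (fun t : ι → ℝ => ∏ j, t j) (ENNReal.ofReal p)
      (unitCubeMeasure ι) = 1 / (p + 1) ^ (Fintype.card ι / p) := by
  rw [lpNorm_fintype_prod (f := fun _ t => t) hp fun _ => by
      simpa using (memLp_rpow_Icc (s := 0) zero_le_one).1,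
    Finset.prod_congr rfl fun _ _ => lpNorm_id_Icc hp, Finset.prod_const, Finset.card_univ,
    ← Real.rpow_mul_natCast (by positivity), Real.div_rpow zero_le_one (by positivity),
    Real.one_rpow, one_div_mul_eq_div]

theorem integral_prod_coord_mul_prod_rpow (hpq : p.HolderConjugate q) :
    ∫ t : ι → ℝ, (∏ j, t j) * ∏ j, t j ^ (p - 1) ∂(unitCubeMeasure ι)
      = lpNorm (fun t : ι → ℝ => ∏ j, t j) (ENNReal.ofReal p) (unitCubeMeasure ι)
        * lpNorm (fun t => ∏ j, t j ^ (p - 1)) (ENNReal.ofReal q) (unitCubeMeasure ι) := by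
  simp only [← Finset.prod_mul_distrib]
  rw [integral_fintype_prod_eq_prod (𝕜 := ℝ) fun _ t => t * t ^ (p - 1),
    lpNorm_fintype_prod (f := fun _ t => t) hpq.pos fun _ => by
      simpa using (memLp_rpow_Icc (s := 0) zero_le_one).1,
    lpNorm_fintype_prod hpq.symm.pos fun _ => (memLp_rpow_Icc (s := 0) hpq.sub_one_pos.le).1,
    ← Finset.prod_mul_distrib]
  exact Finset.prod_congr rfl fun _ _ => integral_mul_rpow_sub_one_Icc hpq

theorem lpNorm_prod_rpow_pos (hpq : p.HolderConjugate q) :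
    0 < lpNorm (fun t => ∏ j, t j ^ (p - 1)) (ENNReal.ofReal q) (unitCubeMeasure ι) := by
  have hp := hpq.pos
  rw [lpNorm_fintype_prod hpq.symm.pos fun _ => (memLp_rpow_Icc (s := 0) hpq.sub_one_pos.le).1]
  refine Finset.prod_pos fun _ _ => ?_
  rw [lpNorm_rpow_sub_one_Icc hpq]
  positivity

end UnitCube

section Discrepancy

variable {p : ℝ} {d N : ℕ}

theorem card_filter_div_eq_sum_boxIndicator (P : Fin N → Fin d → ℝ) (t : Fin d → ℝ) :
    ((Finset.univ.filter fun k => ∀ j, P k j < t j).card : ℝ) / N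
      = ∑ k, (1 / N : ℝ) * boxIndicator (P k) t := by
  rw [← Finset.mul_sum, one_div_mul_eq_div]
  simp only [boxIndicator_eq_ite, Finset.sum_boole]

theorem LpDiscrepancy_eq_lpNorm (hp : 0 < p) (P : Fin N → Fin d → ℝ) :
    LpDiscrepancy p d N P
      = lpNorm (∑ k, (1 / N : ℝ) • boxIndicator (P k) - fun t => ∏ j, t j) (ENNReal.ofReal p)
          (unitCubeMeasure (Fin d)) := by
  have hmem : MemLp (∑ k, (1 / N : ℝ) • boxIndicator (P k)) (ENNReal.ofReal p)
      (unitCubeMeasure (Fin d)) :=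
    memLp_finsetSum' _ fun k _ => (memLp_boxIndicator hp (P k)).const_smul _
  rw [lpNorm_ofReal_eq_integral_abs_rpow hp (hmem.sub (memLp_prod_coord hp)).1, LpDiscrepancy,
    volume_restrict_Icc_pi]
  simp only [card_filter_div_eq_sum_boxIndicator, Pi.sub_apply, Finset.sum_apply, Pi.smul_apply,
    smul_eq_mul, Pi.zero_apply, Pi.one_apply]

theorem le_LpDiscrepancy (hp : 1 < p) {P : Fin N → Fin d → ℝ}
    (hP : ∀ k j, P k j ∈ Set.Icc (0 : ℝ) 1) :
    (1 - N * curseRatio p ^ d) / 2 * (1 / (p + 1) ^ ((d : ℝ) / p)) ≤ LpDiscrepancy p d N P := by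
  have hpq := Real.HolderConjugate.conjExponent hp
  have hpair : ∀ k, ∫ t, ((1 / N : ℝ) • boxIndicator (P k)) t * ∏ j, t j ^ (p - 1)
        ∂(unitCubeMeasure (Fin d))
      ≤ curseRatio p ^ d
        * lpNorm ((1 / N : ℝ) • boxIndicator (P k)) (ENNReal.ofReal p) (unitCubeMeasure (Fin d))
        * lpNorm (fun t => ∏ j, t j ^ (p - 1)) (ENNReal.ofReal p.conjExponent)
            (unitCubeMeasure (Fin d)) := by
    intro k
    have hN : (0 : ℝ) ≤ 1 / N := by positivity
    have h := mul_le_mul_of_nonneg_left (integral_boxIndicator_mul_le hpq (hP k)) hN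
    rw [Fintype.card_fin] at h
    rw [lpNorm_const_smul, coe_nnnorm, Real.norm_of_nonneg hN]
    simp only [Pi.smul_apply, smul_eq_mul, mul_assoc, integral_const_mul] at h ⊢
    rwa [mul_left_comm (curseRatio p ^ d)]
  have hbound := one_sub_card_mul_div_two_mul_lpNorm_le hpq
    (pow_nonneg (curseRatio_pos hp.le).le d)
    (fun k => (memLp_boxIndicator hpq.pos (P k)).const_smul _)
    (fun k t => mul_nonneg (by positivity) (boxIndicator_nonneg (P k) t))
    (memLp_prod_coord hpq.pos)
    (memLp_fintype_prod hpq.symm.pos fun _ => memLp_rpow_Icc hpq.sub_one_pos.le)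
    (lpNorm_prod_rpow_pos hpq) (integral_prod_coord_mul_prod_rpow hpq).ge hpair
  rw [Fintype.card_fin, lpNorm_prod_coord hpq.pos, Fintype.card_fin] at hbound
  rwa [LpDiscrepancy_eq_lpNorm hpq.pos]

end Discrepancy

section Grid

theorem abs_prod_sub_prod_le_sum {ι : Type*} (s : Finset ι) {a b : ι → ℝ}
    (ha : ∀ i ∈ s, a i ∈ Set.Icc (0 : ℝ) 1) (hb : ∀ i ∈ s, b i ∈ Set.Icc (0 : ℝ) 1) :
    |∏ i ∈ s, a i - ∏ i ∈ s, b i| ≤ ∑ i ∈ s, |a i - b i| := by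
  classical
  induction s using Finset.induction_on with
  | empty => simp
  | insert i s hi ih =>
    simp only [Finset.forall_mem_insert] at ha hb
    rw [Finset.prod_insert hi, Finset.prod_insert hi, Finset.sum_insert hi]
    have hb₀ : 0 ≤ ∏ j ∈ s, b j := Finset.prod_nonneg fun j hj => (hb.2 j hj).1
    have hb₁ : ∏ j ∈ s, b j ≤ 1 :=
      Finset.prod_le_one (fun j hj => (hb.2 j hj).1) fun j hj => (hb.2 j hj).2
    calc |a i * ∏ j ∈ s, a j - b i * ∏ j ∈ s, b j|
        = |(a i - b i) * ∏ j ∈ s, b j + a i * (∏ j ∈ s, a j - ∏ j ∈ s, b j)| := by ring_nf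
      _ ≤ |a i - b i| * ∏ j ∈ s, b j + a i * |∏ j ∈ s, a j - ∏ j ∈ s, b j| := by
        refine (abs_add_le _ _).trans_eq ?_
        rw [abs_mul, abs_mul, abs_of_nonneg hb₀, abs_of_nonneg ha.1.1]
      _ ≤ |a i - b i| + |∏ j ∈ s, a j - ∏ j ∈ s, b j| :=
        add_le_add (mul_le_of_le_one_right (abs_nonneg _) hb₁)
          (mul_le_of_le_one_left (abs_nonneg _) ha.1.2)
      _ ≤ |a i - b i| + ∑ j ∈ s, |a j - b j| := by gcongr; exact ih ha.2 hb.2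

theorem sum_indicator_Ioi_div_eq_ceil {n : ℕ} (hn : 0 < n) {s : ℝ} (hs : s ≤ 1) :
    ∑ i : Fin n, (Set.Ioi ((i : ℕ) / n : ℝ)).indicator (1 : ℝ → ℝ) s = ⌈(n : ℝ) * s⌉₊ := by
  have hn₀ : (0 : ℝ) < n := Nat.cast_pos.2 hn
  have hceil : ⌈(n : ℝ) * s⌉₊ ≤ n := Nat.ceil_le.2 (mul_le_of_le_one_right hn₀.le hs)
  have hfilter : (Finset.range n).filter (fun i : ℕ => (i / n : ℝ) < s)
      = Finset.range ⌈(n : ℝ) * s⌉₊ := by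
    ext i
    rw [Finset.mem_filter, Finset.mem_range, Finset.mem_range, Nat.lt_ceil, div_lt_iff₀' hn₀,
      and_iff_right_of_imp fun h => (Nat.lt_ceil.2 h).trans_le hceil]
  simp only [Set.indicator_apply, Set.mem_Ioi, Pi.one_apply]
  rw [Fin.sum_univ_eq_sum_range fun i : ℕ => if (i / n : ℝ) < s then (1 : ℝ) else 0,
    Finset.sum_boole, hfilter, Finset.card_range]

theorem abs_ceil_mul_div_sub_le {a s : ℝ} (ha : 0 < a) (hs : 0 ≤ s) :
    |⌈a * s⌉₊ / a - s| ≤ 1 / a := by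
  have hle := Nat.le_ceil (a * s)
  have hlt := Nat.ceil_lt_add_one (mul_nonneg ha.le hs)
  rw [div_sub' ha.ne', abs_div, abs_of_pos ha, abs_of_nonneg (sub_nonneg.2 hle)]
  gcongr
  linarith

/-- The uniform grid `{0, 1/n, …, (n-1)/n}^d`, enumerated through `Fin (n ^ d) ≃ (Fin d → Fin n)`.
It witnesses that the `N`-th minimal discrepancy tends to `0`. -/
noncomputable def gridPoints (n d : ℕ) (k : Fin (n ^ d)) (j : Fin d) : ℝ :=
  (finFunctionFinEquiv.symm k j : ℕ) / n

theorem gridPoints_mem_Ico {n d : ℕ} (k : Fin (n ^ d)) (j : Fin d) :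
    gridPoints n d k j ∈ Set.Ico (0 : ℝ) 1 := by
  have hlt := (finFunctionFinEquiv.symm k j).2
  have hn : (0 : ℝ) < n := Nat.cast_pos.2 (Nat.zero_lt_of_lt hlt)
  exact ⟨div_nonneg (Nat.cast_nonneg _) hn.le, (div_lt_one hn).2 (Nat.cast_lt.2 hlt)⟩

theorem sum_boxIndicator_gridPoints {n d : ℕ} (hn : 0 < n) {t : Fin d → ℝ} (ht : ∀ j, t j ≤ 1) :
    ∑ k, boxIndicator (gridPoints n d k) t = ∏ j, (⌈(n : ℝ) * t j⌉₊ : ℝ) := by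
  simp only [← sum_indicator_Ioi_div_eq_ceil hn (ht _)]
  rw [Finset.prod_univ_sum, Fintype.piFinset_univ]
  exact Equiv.sum_comp finFunctionFinEquiv.symm fun i : Fin d → Fin n =>
    boxIndicator (fun j => ((i j : ℕ) / n : ℝ)) t

theorem abs_card_filter_gridPoints_div_sub_prod_le {n d : ℕ} (hn : 0 < n) {t : Fin d → ℝ}
    (ht : t ∈ Set.Icc 0 1) :
    |((Finset.univ.filter fun k => ∀ j, gridPoints n d k j < t j).card : ℝ) / (n ^ d : ℕ)
        - ∏ j, t j| ≤ d / n := by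
  have hn₀ : (0 : ℝ) < n := Nat.cast_pos.2 hn
  have hcount : ((Finset.univ.filter fun k => ∀ j, gridPoints n d k j < t j).card : ℝ)
      / (n ^ d : ℕ) = ∏ j, (⌈(n : ℝ) * t j⌉₊ / n : ℝ) := by
    rw [card_filter_div_eq_sum_boxIndicator, ← Finset.mul_sum, sum_boxIndicator_gridPoints hn ht.2,
      Finset.prod_div_distrib, Finset.prod_const, Finset.card_univ, Fintype.card_fin,
      Nat.cast_pow, one_div_mul_eq_div]
  have hmem : ∀ j, (⌈(n : ℝ) * t j⌉₊ / n : ℝ) ∈ Set.Icc (0 : ℝ) 1 := fun j =>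
    ⟨by positivity, (div_le_one hn₀).2 <| Nat.cast_le.2 <| Nat.ceil_le.2 <|
      mul_le_of_le_one_right hn₀.le (ht.2 j)⟩
  calc _ ≤ ∑ j, |(⌈(n : ℝ) * t j⌉₊ / n : ℝ) - t j| := by
        rw [hcount]
        exact abs_prod_sub_prod_le_sum _ (fun j _ => hmem j) fun j _ => ⟨ht.1 j, ht.2 j⟩
    _ ≤ ∑ _j : Fin d, (1 / n : ℝ) :=
        Finset.sum_le_sum fun j _ => abs_ceil_mul_div_sub_le hn₀ (ht.1 j)
    _ = d / n := by
        rw [Finset.sum_const, Finset.card_univ, Fintype.card_fin, nsmul_eq_mul, mul_one_div]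

end Grid

section MinimalDiscrepancy

variable {p : ℝ} {d N : ℕ}

theorem LpDiscrepancy_nonneg (p : ℝ) (P : Fin N → Fin d → ℝ) : 0 ≤ LpDiscrepancy p d N P :=
  Real.rpow_nonneg (integral_nonneg fun _ => Real.rpow_nonneg (abs_nonneg _) p) _

theorem LpDiscrepancy_le_of_abs_le (hp : 0 < p) {P : Fin N → Fin d → ℝ} {C : ℝ}
    (h : ∀ t ∈ Set.Icc (0 : Fin d → ℝ) 1,
      |((Finset.univ.filter fun k => ∀ j, P k j < t j).card : ℝ) / N - ∏ j, t j| ≤ C) :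
    LpDiscrepancy p d N P ≤ C := by
  have hC : 0 ≤ C := (abs_nonneg _).trans (h 0 (Set.left_mem_Icc.2 zero_le_one))
  have hvol : (volume : Measure (Fin d → ℝ)).real (Set.Icc 0 1) = 1 := by
    simp [measureReal_def, Real.volume_Icc_pi_toReal zero_le_one]
  have hint := norm_setIntegral_le_of_norm_le_const (μ := volume) (C := C ^ p)
    isCompact_Icc.measure_lt_top fun t ht => by
      rw [Real.norm_of_nonneg (Real.rpow_nonneg (abs_nonneg _) p)]
      exact Real.rpow_le_rpow (abs_nonneg _) (h t ht) hp.le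
  rw [hvol, mul_one] at hint
  rw [LpDiscrepancy, one_div, Real.rpow_inv_le_iff_of_pos _ hC hp]
  · exact (Real.le_norm_self _).trans hint
  · exact integral_nonneg fun _ => Real.rpow_nonneg (abs_nonneg _) p

theorem minLpDiscrepancy_le {P : Fin N → Fin d → ℝ} (hP : ∀ k j, P k j ∈ Set.Ico (0 : ℝ) 1) :
    minLpDiscrepancy p N d ≤ LpDiscrepancy p d N P :=
  csInf_le ⟨0, Set.forall_mem_image.2 fun Q _ => LpDiscrepancy_nonneg p Q⟩ ⟨P, hP, rfl⟩

theorem le_minLpDiscrepancy (hp : 1 < p) :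
    (1 - N * curseRatio p ^ d) / 2 * (1 / (p + 1) ^ ((d : ℝ) / p)) ≤ minLpDiscrepancy p N d := by
  refine le_csInf (Set.Nonempty.image _ ⟨0, fun _ _ => Set.left_mem_Ico.2 one_pos⟩)
    (Set.forall_mem_image.2 fun P hP => ?_)
  exact le_LpDiscrepancy hp fun k j => Set.Ico_subset_Icc_self (hP k j)

theorem exists_minLpDiscrepancy_le (hp : 0 < p) (d : ℕ) {δ : ℝ} (hδ : 0 < δ) :
    ∃ N : ℕ, 0 < N ∧ minLpDiscrepancy p N d ≤ δ := by
  obtain ⟨n, hn⟩ := exists_nat_gt (d / δ)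
  have hn₀ : (0 : ℝ) < n := (by positivity : (0 : ℝ) ≤ d / δ).trans_lt hn
  refine ⟨n ^ d, pow_pos (Nat.cast_pos.1 hn₀) d, ?_⟩
  calc minLpDiscrepancy p (n ^ d) d ≤ LpDiscrepancy p d (n ^ d) (gridPoints n d) :=
        minLpDiscrepancy_le gridPoints_mem_Ico
    _ ≤ d / n := LpDiscrepancy_le_of_abs_le hp fun t ht =>
        abs_card_filter_gridPoints_div_sub_prod_le (Nat.cast_pos.1 hn₀) ht
    _ ≤ δ := ((div_lt_comm₀ hδ hn₀).1 hn).le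

theorem minLpDiscrepancy_invLpDiscrepancy_le {ε : ℝ} (hp : 0 < p) (hε : 0 < ε) (d : ℕ) :
    minLpDiscrepancy p (invLpDiscrepancy p ε d) d ≤ ε * (1 / (p + 1) ^ ((d : ℝ) / p)) :=
  (Nat.sInf_mem (exists_minLpDiscrepancy_le hp d (by positivity))).2

end MinimalDiscrepancy

theorem curse_of_dimensionality_Lp_discrepancy (p : ℝ) (hp : 1 < p)
    (d : ℕ) (hd : 1 ≤ d) (ε : ℝ) (hε : ε ∈ Set.Ioo (0:ℝ) (1/2)) :
    ((1 / 2 + ((p + 1) / p) * (1 + 2 ^ (p / (p + 1)) - 2 ^ (1 / (p + 1))) / 4)⁻¹) ^ d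
        * (1 - 2 * ε)
      ≤ (invLpDiscrepancy p ε d : ℝ) := by
  have hp₀ : 0 < p := one_pos.trans hp
  change (curseRatio p)⁻¹ ^ d * (1 - 2 * ε) ≤ _
  have hle : (1 - invLpDiscrepancy p ε d * curseRatio p ^ d) / 2 ≤ ε := by
    exact le_of_mul_le_mul_right ((le_minLpDiscrepancy hp).trans
      (minLpDiscrepancy_invLpDiscrepancy_le hp₀ hε.1 d)) (by positivity)
  rw [inv_pow, inv_mul_le_iff₀ (pow_pos (curseRatio_pos hp.le) d)]
  linarith
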